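/- Let λ1 ≥ λ2 ≥ λ3 ≥ λ4 ≥ 0 with λ1 + λ2 + λ3 + λ4 = 1, and suppose 2λ2 + λ3 − λ1 < 0, 2λ3 + λ4 − λ2 ≥ 0, λ3 ≤ 2λ4, and λ2 > λ3 + λ4 (spectral region B). Then there exists no non-entangling (NE) map Λ satisfying Λ(ρ_λ) = σ_λ, where ρ_λ = λ1 Φ1 + λ2 |01⟩⟨01| + λ3 Φ2 + λ4 |10⟩⟨10| and σ_λ = λ1 Φ1 + λ2 Φ2 + λ3 Φ3 + λ4 Φ4. -/

import Mathlib

open Matrix Kronecker Polynomial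
open scoped ComplexOrder

noncomputable section

/-- Index set for two qubits: ℂ²⊗ℂ² ≅ ℂ⁴ with basis |00⟩,|01⟩,|10⟩,|11⟩. -/
abbrev Q2 : Type := Fin 2 × Fin 2
abbrev Mat2 : Type := Matrix (Fin 2) (Fin 2) ℂ
abbrev Mat4 : Type := Matrix Q2 Q2 ℂ
abbrev Vec4 : Type := Q2 → ℂ

/-- Computational basis vector |ij⟩. -/
def ket (i j : Fin 2) : Vec4 := fun p => if p = (i, j) then 1 else 0

/-- The rank-one matrix |ψ⟩⟨φ|. -/
def ketBra (ψ φ : Vec4) : Mat4 := fun p q => ψ p * star (φ q)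

/-- The four Bell vectors |Φ1⟩,…,|Φ4⟩. -/
def bell : Fin 4 → Vec4 :=
  ![(Real.sqrt 2 : ℂ)⁻¹ • (ket 0 0 + ket 1 1),
    (Real.sqrt 2 : ℂ)⁻¹ • (ket 0 0 - ket 1 1),
    (Real.sqrt 2 : ℂ)⁻¹ • (ket 1 0 + ket 0 1),
    (Real.sqrt 2 : ℂ)⁻¹ • (ket 1 0 - ket 0 1)]

/-- Bell projectors Φ_i = |Φ_i⟩⟨Φ_i|. -/
def bellProj (i : Fin 4) : Mat4 := ketBra (bell i) (bell i)

/-- A two-qubit density matrix: Hermitian positive semidefinite with trace one. -/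
def IsDensity (ρ : Mat4) : Prop := ρ.PosSemidef ∧ ρ.trace = 1

/-- Unit vector in ℂ². -/
def IsUnitVec (u : Fin 2 → ℂ) : Prop := ∑ x, Complex.normSq (u x) = 1

/-- Separable two-qubit density matrix: convex mixture of products of pure states. -/
def SepState (ρ : Mat4) : Prop :=
  ∃ (n : ℕ) (p : Fin n → ℝ) (u v : Fin n → Fin 2 → ℂ),
    (∀ i, 0 ≤ p i) ∧ (∑ i, p i = 1) ∧
    (∀ i, IsUnitVec (u i)) ∧ (∀ i, IsUnitVec (v i)) ∧
    ρ = ∑ i, (p i : ℂ) • (vecMulVec (u i) (star (u i)) ⊗ₖ vecMulVec (v i) (star (v i)))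

/-- A SEP map: Kraus operators in product form, trace preserving. -/
def IsSEP (T : Mat4 → Mat4) : Prop :=
  ∃ (k : ℕ) (A B : Fin k → Mat2),
    (∑ i, (A i ⊗ₖ B i)ᴴ * (A i ⊗ₖ B i) = 1) ∧
    ∀ X, T X = ∑ i, (A i ⊗ₖ B i) * X * (A i ⊗ₖ B i)ᴴ

/-- CPTP map in Kraus form. -/
def IsCPTP (T : Mat4 → Mat4) : Prop :=
  ∃ (k : ℕ) (K : Fin k → Mat4),
    (∑ i, (K i)ᴴ * K i = 1) ∧ ∀ X, T X = ∑ i, K i * X * (K i)ᴴ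

/-- Non-entangling (NE) map: CPTP and maps separable states to separable states. -/
def IsNE (T : Mat4 → Mat4) : Prop :=
  IsCPTP T ∧ ∀ ρ, SepState ρ → SepState (T ρ)

/-- The MEMS state ρ_λ = λ1 Φ1 + λ2 |01⟩⟨01| + λ3 Φ2 + λ4 |10⟩⟨10|. -/
def mems (l1 l2 l3 l4 : ℝ) : Mat4 :=
  (l1 : ℂ) • bellProj 0 + (l2 : ℂ) • ketBra (ket 0 1) (ket 0 1) +
  (l3 : ℂ) • bellProj 1 + (l4 : ℂ) • ketBra (ket 1 0) (ket 1 0)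

/-- The Bell-diagonal state σ_λ = λ1 Φ1 + λ2 Φ2 + λ3 Φ3 + λ4 Φ4. -/
def bdiag (l1 l2 l3 l4 : ℝ) : Mat4 :=
  (l1 : ℂ) • bellProj 0 + (l2 : ℂ) • bellProj 1 + (l3 : ℂ) • bellProj 2 + (l4 : ℂ) • bellProj 3

/-- The normalized vector |Φ1(ε)⟩ = (|Φ1⟩ + ε|10⟩)/√(1+ε²). -/
def phi1eps (ε : ℝ) : Vec4 :=
  (Real.sqrt (1 + ε ^ 2) : ℂ)⁻¹ • (bell 0 + (ε : ℂ) • ket 1 0)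

/-!
Let `T` be linear and positive and preserve separability. A separable state overlaps each Bell
vector by at most `1/2`, while the equal mixture of two distinct Bell states is separable; hence
`⟨Φk|T(Φi)|Φk⟩ + ⟨Φk|T(Φj)|Φk⟩ ≤ 1` for `i ≠ j`. This also controls the images of `|01⟩⟨01|` and
`|10⟩⟨10|`, whose sum is `Φ3 + Φ4`.

If `T(ρ_λ) = σ_λ`, then comparing overlaps with `Φ1` and using `λ1 > 2 λ2 + λ3` gives
`⟨Φ1|T(Φ1)|Φ1⟩ ≥ 1`. As `T(Φ1)` is positive of trace one, `⟨Φ2|T(Φ1)|Φ2⟩ = 0`, and comparing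
overlaps with `Φ2` leaves only `λ2 ≤ (λ2 + λ3 + λ4) / 2`, against `λ2 > λ3 + λ4`.
-/

section Overlap

variable {n : Type*} [Fintype n]

/-- The overlap `⟨ψ|Y|ψ⟩`, as a real functional of the matrix `Y`. For Hermitian `Y` the number
`⟨ψ|Y|ψ⟩` is real, so passing to the real part loses nothing. -/
def overlap (ψ : n → ℂ) : Matrix n n ℂ →ₗ[ℝ] ℝ where
  toFun Y := (star ψ ⬝ᵥ Y *ᵥ ψ).re
  map_add' X Y := by rw [add_mulVec, dotProduct_add, Complex.add_re]
  map_smul' c Y := by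
    rw [smul_mulVec, dotProduct_smul, Complex.smul_re, RingHom.id_apply]

lemma overlap_apply (ψ : n → ℂ) (Y : Matrix n n ℂ) : overlap ψ Y = (star ψ ⬝ᵥ Y *ᵥ ψ).re := rfl

lemma overlap_nonneg (ψ : n → ℂ) {Y : Matrix n n ℂ} (hY : Y.PosSemidef) : 0 ≤ overlap ψ Y :=
  (Complex.le_def.1 (hY.dotProduct_mulVec_nonneg ψ)).1

lemma overlap_eq_re_trace_mul (ψ : n → ℂ) (Y : Matrix n n ℂ) :
    overlap ψ Y = (Y * vecMulVec ψ (star ψ)).trace.re := by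
  rw [overlap_apply, mul_vecMulVec, trace_vecMulVec, dotProduct_comm]

lemma overlap_vecMulVec_star (ψ φ : n → ℂ) :
    overlap ψ (vecMulVec φ (star φ)) = Complex.normSq (star ψ ⬝ᵥ φ) := by
  have hconj : star φ ⬝ᵥ ψ = star (star ψ ⬝ᵥ φ) := star_dotProduct φ ψ
  rw [overlap_apply, vecMulVec_mulVec, hconj, op_smul_eq_smul, dotProduct_smul, smul_eq_mul,
    mul_comm, RCLike.star_def, Complex.mul_conj, Complex.ofReal_re]

end Overlap

section KetBra

lemma ketBra_smul_self (c : ℂ) (ψ : Vec4) :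
    ketBra (c • ψ) (c • ψ) = Complex.normSq c • ketBra ψ ψ := by
  ext p q
  simp only [ketBra, Pi.smul_apply, Matrix.smul_apply, smul_eq_mul, star_mul', RCLike.star_def,
    Complex.real_smul, ← Complex.mul_conj]
  ring

lemma ketBra_parallelogram (ψ φ : Vec4) :
    ketBra (ψ + φ) (ψ + φ) + ketBra (ψ - φ) (ψ - φ) = (2 : ℝ) • (ketBra ψ ψ + ketBra φ φ) := by
  ext p q
  simp only [ketBra, Pi.add_apply, Pi.sub_apply, Matrix.add_apply, Matrix.smul_apply, star_add,
    star_sub, Complex.real_smul, Complex.ofReal_ofNat]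
  ring

lemma posSemidef_ketBra_self (ψ : Vec4) : (ketBra ψ ψ).PosSemidef :=
  posSemidef_vecMulVec_self_star ψ

lemma overlap_ketBra_self (ψ φ : Vec4) :
    overlap ψ (ketBra φ φ) = Complex.normSq (star ψ ⬝ᵥ φ) :=
  overlap_vecMulVec_star ψ φ

end KetBra

section Bell

lemma bell_two : bell 2 = (Real.sqrt 2 : ℂ)⁻¹ • (ket 1 0 + ket 0 1) := rfl

lemma bell_three : bell 3 = (Real.sqrt 2 : ℂ)⁻¹ • (ket 1 0 - ket 0 1) := rfl

lemma ofReal_sqrt_two_mul_self : (Real.sqrt 2 : ℂ) * Real.sqrt 2 = 2 := by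
  rw [← Complex.ofReal_mul, Real.mul_self_sqrt zero_le_two, Complex.ofReal_ofNat]

lemma normSq_inv_sqrt_two : Complex.normSq (Real.sqrt 2 : ℂ)⁻¹ = 1 / 2 := by
  rw [map_inv₀, Complex.normSq_ofReal, Real.mul_self_sqrt zero_le_two, one_div]

lemma star_bell_dotProduct (i : Fin 4) (ψ : Vec4) :
    star (bell i) ⬝ᵥ ψ = (Real.sqrt 2 : ℂ)⁻¹ *
      ![ψ (0, 0) + ψ (1, 1), ψ (0, 0) - ψ (1, 1), ψ (1, 0) + ψ (0, 1), ψ (1, 0) - ψ (0, 1)] i := by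
  fin_cases i <;> simp [bell, ket, dotProduct, Fintype.sum_prod_type] <;> ring

lemma star_bell_dotProduct_bell (i j : Fin 4) :
    star (bell i) ⬝ᵥ bell j = if i = j then 1 else 0 := by
  have hsqrt : (Real.sqrt 2 : ℂ)⁻¹ * ((Real.sqrt 2 : ℂ)⁻¹ + (Real.sqrt 2 : ℂ)⁻¹) = 1 := by
    rw [← two_mul, ← ofReal_sqrt_two_mul_self]
    simp
  rw [star_bell_dotProduct]
  fin_cases i <;> fin_cases j <;> simp [bell, ket, hsqrt]

lemma overlap_bell_bellProj (i j : Fin 4) :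
    overlap (bell i) (bellProj j) = if i = j then 1 else 0 := by
  rw [bellProj, overlap_ketBra_self, star_bell_dotProduct_bell]
  split_ifs <;> simp

lemma sum_bellProj : ∑ i, bellProj i = 1 := by
  let B : Matrix (Fin 4) Q2 ℂ := of fun i => star (bell i)
  have hB : B * Bᴴ = 1 := by
    ext i j
    have hij := star_bell_dotProduct_bell i j
    simpa [B, mul_apply, dotProduct, one_apply] using hij
  ext p q
  have hpq := congrFun (congrFun ((mul_eq_one_comm_of_card_eq _ _ _ (by simp)).1 hB) p) q
  simpa [B, mul_apply, bellProj, ketBra, Matrix.sum_apply] using hpq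

lemma ketBra_ket_add_eq_bellProj_add :
    ketBra (ket 0 1) (ket 0 1) + ketBra (ket 1 0) (ket 1 0) = bellProj 2 + bellProj 3 := by
  rw [bellProj, bellProj, bell_two, bell_three, ketBra_smul_self, ketBra_smul_self, ← smul_add,
    ketBra_parallelogram, smul_smul, normSq_inv_sqrt_two, one_div_mul_cancel two_ne_zero, one_smul,
    add_comm]

lemma sum_overlap_bell (Y : Mat4) : ∑ i, overlap (bell i) Y = Y.trace.re := by
  have htrace (i : Fin 4) : overlap (bell i) Y = (Y * bellProj i).trace.re :=
    overlap_eq_re_trace_mul (bell i) Y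
  simp only [htrace]
  rw [← Complex.re_sum, ← trace_sum, ← Finset.mul_sum, sum_bellProj, mul_one]

lemma overlap_bell_add_le_trace {Y : Mat4} (hY : Y.PosSemidef) {i j : Fin 4} (hij : i ≠ j) :
    overlap (bell i) Y + overlap (bell j) Y ≤ Y.trace.re := by
  rw [← sum_overlap_bell, ← Finset.sum_pair (f := fun k => overlap (bell k) Y) hij]
  exact Finset.sum_le_univ_sum_of_nonneg fun k => overlap_nonneg (bell k) hY

end Bell

section Separable

/-- The product vector `u ⊗ v`. -/
def prodVec (u v : Fin 2 → ℂ) : Vec4 := fun p => u p.1 * v p.2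

/-- The projectors onto normalized product vectors, the extreme points of the set of separable
states. -/
def pureProductStates : Set Mat4 :=
  {ρ | ∃ u v, IsUnitVec u ∧ IsUnitVec v ∧ ρ = ketBra (prodVec u v) (prodVec u v)}

lemma vecMulVec_star_kronecker_vecMulVec_star (u v : Fin 2 → ℂ) :
    vecMulVec u (star u) ⊗ₖ vecMulVec v (star v) = ketBra (prodVec u v) (prodVec u v) := by
  ext p q
  simp only [kroneckerMap_apply, vecMulVec_apply, Pi.star_apply, ketBra, prodVec, star_mul']
  ring

lemma sepState_iff_mem_convexHull (ρ : Mat4) :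
    SepState ρ ↔ ρ ∈ convexHull ℝ pureProductStates := by
  simp only [SepState, vecMulVec_star_kronecker_vecMulVec_star, Complex.coe_smul]
  constructor
  · rintro ⟨n, p, u, v, hp, hsum, hu, hv, rfl⟩
    exact mem_convexHull_of_exists_fintype p _ hp hsum (fun i => ⟨u i, v i, hu i, hv i, rfl⟩) rfl
  · intro hρ
    obtain ⟨ι, _, p, z, hp, hsum, hz, rfl⟩ := mem_convexHull_iff_exists_fintype.1 hρ
    choose u v hu hv hz using hz
    let e := (Fintype.equivFin ι).symm
    refine ⟨Fintype.card ι, p ∘ e, u ∘ e, v ∘ e, fun i => hp _, ?_, fun i => hu _, fun i => hv _,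
      ?_⟩
    · rw [← hsum]
      exact e.sum_comp p
    · simp only [hz]
      exact (e.sum_comp fun i => p i • ketBra (prodVec (u i) (v i)) (prodVec (u i) (v i))).symm

lemma normSq_mul_add_mul_le (a b c d : ℂ) :
    Complex.normSq (a * c + b * d) ≤
      (Complex.normSq a + Complex.normSq b) * (Complex.normSq c + Complex.normSq d) := by
  have lagrange : (Complex.normSq a + Complex.normSq b) * (Complex.normSq c + Complex.normSq d) =
      Complex.normSq (a * c + b * d) + Complex.normSq (a * star d - b * star c) := by
    simp only [Complex.normSq_apply, Complex.add_re, Complex.add_im, Complex.sub_re,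
      Complex.sub_im, Complex.mul_re, Complex.mul_im, RCLike.star_def, Complex.conj_re,
      Complex.conj_im]
    ring
  rw [lagrange]
  exact le_add_of_nonneg_right (Complex.normSq_nonneg _)

lemma normSq_star_bell_dotProduct_prodVec_le (i : Fin 4) {u v : Fin 2 → ℂ} (hu : IsUnitVec u)
    (hv : IsUnitVec v) : Complex.normSq (star (bell i) ⬝ᵥ prodVec u v) ≤ 1 / 2 := by
  rw [IsUnitVec, Fin.sum_univ_two] at hu hv
  have hCS {a b c d : ℂ} (hab : Complex.normSq a + Complex.normSq b = 1)
      (hcd : Complex.normSq c + Complex.normSq d = 1) :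
      Complex.normSq ((Real.sqrt 2 : ℂ)⁻¹ * (a * c + b * d)) ≤ 1 / 2 := by
    rw [Complex.normSq_mul, normSq_inv_sqrt_two]
    linarith [(normSq_mul_add_mul_le a b c d).trans_eq (by rw [hab, hcd, mul_one])]
  have hu' : Complex.normSq (u 0) + Complex.normSq (-u 1) = 1 := by rwa [Complex.normSq_neg]
  have hu'' : Complex.normSq (u 1) + Complex.normSq (-u 0) = 1 := by
    rwa [Complex.normSq_neg, add_comm]
  rw [star_bell_dotProduct]
  fin_cases i
  · exact hCS hu hv
  · simpa [prodVec, sub_eq_add_neg] using hCS hu' hv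
  · simpa [prodVec, add_comm] using hCS hu (add_comm _ _ |>.trans hv)
  · simpa [prodVec, sub_eq_add_neg] using hCS hu'' hv

lemma trace_vecMulVec_star {u : Fin 2 → ℂ} (hu : IsUnitVec u) :
    (vecMulVec u (star u)).trace = 1 := by
  simp only [trace_vecMulVec, dotProduct, Pi.star_apply, RCLike.star_def, Complex.mul_conj]
  exact_mod_cast hu

lemma trace_ketBra_prodVec {u v : Fin 2 → ℂ} (hu : IsUnitVec u) (hv : IsUnitVec v) :
    (ketBra (prodVec u v) (prodVec u v)).trace = 1 := by
  rw [← vecMulVec_star_kronecker_vecMulVec_star, trace_kronecker, trace_vecMulVec_star hu,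
    trace_vecMulVec_star hv, one_mul]

lemma overlap_bell_le_half_of_sepState (i : Fin 4) {ρ : Mat4} (hρ : SepState ρ) :
    overlap (bell i) ρ ≤ 1 / 2 := by
  rw [sepState_iff_mem_convexHull] at hρ
  refine convexHull_min ?_ (convex_halfSpace_le (overlap (bell i)).isLinear (1 / 2)) hρ
  rintro _ ⟨u, v, hu, hv, rfl⟩
  rw [Set.mem_ofPred_eq, overlap_ketBra_self]
  exact normSq_star_bell_dotProduct_prodVec_le i hu hv

lemma convex_setOf_isDensity : Convex ℝ {ρ | IsDensity ρ} := by
  rintro X ⟨hX, hXtr⟩ Y ⟨hY, hYtr⟩ a b ha hb hab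
  refine ⟨(hX.smul ha).add (hY.smul hb), ?_⟩
  rw [trace_add, trace_smul, trace_smul, hXtr, hYtr, ← add_smul, hab, one_smul]

lemma SepState.isDensity {ρ : Mat4} (hρ : SepState ρ) : IsDensity ρ := by
  rw [sepState_iff_mem_convexHull] at hρ
  refine convexHull_min ?_ convex_setOf_isDensity hρ
  rintro _ ⟨u, v, hu, hv, rfl⟩
  exact ⟨posSemidef_ketBra_self _, trace_ketBra_prodVec hu hv⟩

lemma sepState_ketBra_prodVec {u v : Fin 2 → ℂ} (hu : IsUnitVec u) (hv : IsUnitVec v) :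
    SepState (ketBra (prodVec u v) (prodVec u v)) :=
  (sepState_iff_mem_convexHull _).2 (subset_convexHull ℝ _ ⟨u, v, hu, hv, rfl⟩)

lemma isUnitVec_single (i : Fin 2) : IsUnitVec (Pi.single i 1) := by
  fin_cases i <;> simp [IsUnitVec]

lemma ket_eq_prodVec (i j : Fin 2) : ket i j = prodVec (Pi.single i 1) (Pi.single j 1) := by
  ext ⟨a, b⟩
  simp [ket, prodVec, Pi.single_apply, ← ite_and, and_comm]

lemma sepState_ketBra_ket (i j : Fin 2) : SepState (ketBra (ket i j) (ket i j)) := by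
  rw [ket_eq_prodVec]
  exact sepState_ketBra_prodVec (isUnitVec_single i) (isUnitVec_single j)

lemma sepState_half_ketBra_add {ψ φ : Vec4} {u v u' v' : Fin 2 → ℂ}
    (hu : IsUnitVec u) (hv : IsUnitVec v) (hu' : IsUnitVec u') (hv' : IsUnitVec v')
    (hadd : ψ + φ = (Real.sqrt 2 : ℂ) • prodVec u v)
    (hsub : ψ - φ = (Real.sqrt 2 : ℂ) • prodVec u' v') :
    SepState ((1 / 2 : ℝ) • (ketBra ψ ψ + ketBra φ φ)) := by
  have hmix := ketBra_parallelogram ψ φ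
  rw [hadd, hsub, ketBra_smul_self, ketBra_smul_self, Complex.normSq_ofReal,
    Real.mul_self_sqrt zero_le_two, ← smul_add] at hmix
  rw [← smul_right_injective _ (two_ne_zero' ℝ) hmix, smul_add, sepState_iff_mem_convexHull]
  exact convex_convexHull ℝ _ ((sepState_iff_mem_convexHull _).1 (sepState_ketBra_prodVec hu hv))
    ((sepState_iff_mem_convexHull _).1 (sepState_ketBra_prodVec hu' hv'))
    one_half_pos.le one_half_pos.le (add_halves 1)

/-- The qubit state `(|0⟩ + z|1⟩)/√2`, on the equator of the Bloch sphere when `|z| = 1`. -/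
def equatorial (z : ℂ) : Fin 2 → ℂ := (Real.sqrt 2 : ℂ)⁻¹ • ![1, z]

lemma isUnitVec_equatorial {z : ℂ} (hz : Complex.normSq z = 1) : IsUnitVec (equatorial z) := by
  simp only [IsUnitVec, equatorial, Fin.sum_univ_two, Pi.smul_apply, smul_eq_mul,
    Complex.normSq_mul, normSq_inv_sqrt_two, cons_val_zero, cons_val_one, map_one, hz]
  norm_num

lemma sqrt_two_smul_prodVec_equatorial (z w : ℂ) :
    (Real.sqrt 2 : ℂ) • prodVec (equatorial z) (equatorial w) =
      (Real.sqrt 2 : ℂ)⁻¹ • (ket 0 0 + w • ket 0 1 + z • ket 1 0 + (z * w) • ket 1 1) := by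
  have hbilin : prodVec (equatorial z) (equatorial w) =
      (Real.sqrt 2 : ℂ)⁻¹ • (Real.sqrt 2 : ℂ)⁻¹ • prodVec ![1, z] ![1, w] := by
    ext p
    simp only [prodVec, equatorial, Pi.smul_apply, smul_eq_mul]
    ring
  rw [hbilin, smul_inv_smul₀ (by simp)]
  congr 1
  ext ⟨a, b⟩
  fin_cases a <;> fin_cases b <;> simp [prodVec, ket]

lemma sepState_half_ketBra_add_of_phases {z w : ℂ} (hz : Complex.normSq z = 1)
    (hw : Complex.normSq w = 1) {ψ φ : Vec4}
    (hψ : ψ = (Real.sqrt 2 : ℂ)⁻¹ • (ket 0 0 + (z * w) • ket 1 1))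
    (hφ : φ = (Real.sqrt 2 : ℂ)⁻¹ • (z • ket 1 0 + w • ket 0 1)) :
    SepState ((1 / 2 : ℝ) • (ketBra ψ ψ + ketBra φ φ)) := by
  refine sepState_half_ketBra_add (isUnitVec_equatorial hz) (isUnitVec_equatorial hw)
    (isUnitVec_equatorial (z := -z) ?_) (isUnitVec_equatorial (z := -w) ?_) ?_ ?_
  · rwa [Complex.normSq_neg]
  · rwa [Complex.normSq_neg]
  · rw [sqrt_two_smul_prodVec_equatorial, hψ, hφ]
    module
  · rw [sqrt_two_smul_prodVec_equatorial, hψ, hφ, neg_mul_neg]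
    module


lemma inv_sqrt_two_smul_add_self (ψ : Vec4) :
    (Real.sqrt 2 : ℂ)⁻¹ • (ψ + ψ) = (Real.sqrt 2 : ℂ) • ψ := by
  rw [← two_smul ℂ ψ, ← ofReal_sqrt_two_mul_self, mul_smul, inv_smul_smul₀ (by simp)]

lemma sepState_half_ketBra_add_sub (i j k l : Fin 2) {ψ φ : Vec4}
    (hψ : ψ = (Real.sqrt 2 : ℂ)⁻¹ • (ket i j + ket k l))
    (hφ : φ = (Real.sqrt 2 : ℂ)⁻¹ • (ket i j - ket k l)) :
    SepState ((1 / 2 : ℝ) • (ketBra ψ ψ + ketBra φ φ)) := by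
  refine sepState_half_ketBra_add (isUnitVec_single i) (isUnitVec_single j)
    (isUnitVec_single k) (isUnitVec_single l) ?_ ?_
  · rw [← ket_eq_prodVec, ← inv_sqrt_two_smul_add_self, hψ, hφ]
    module
  · rw [← ket_eq_prodVec, ← inv_sqrt_two_smul_add_self, hψ, hφ]
    module

lemma bellProj_eq_ketBra_I_smul (i : Fin 4) :
    bellProj i = ketBra (Complex.I • bell i) (Complex.I • bell i) := by
  rw [ketBra_smul_self, Complex.normSq_I, one_smul, bellProj]

lemma sepState_half_bellProj_add {i j : Fin 4} (hij : i ≠ j) :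
    SepState ((1 / 2 : ℝ) • (bellProj i + bellProj j)) := by
  wlog hlt : i < j generalizing i j
  · rw [add_comm]
    exact this hij.symm (lt_of_le_of_ne (not_lt.1 hlt) hij.symm)
  have hpairs : i = 0 ∧ j = 1 ∨ i = 2 ∧ j = 3 ∨ i = 0 ∧ j = 2 ∨ i = 0 ∧ j = 3 ∨ i = 1 ∧ j = 2 ∨
      i = 1 ∧ j = 3 := by
    decide +revert
  -- `Φ1 ± Φ4` and `Φ2 ± Φ3` are entangled, but `Φ1 ± iΦ4` and `Φ2 ± iΦ3` are product vectors.
  rcases hpairs with ⟨rfl, rfl⟩ | ⟨rfl, rfl⟩ | ⟨rfl, rfl⟩ | ⟨rfl, rfl⟩ | ⟨rfl, rfl⟩ | ⟨rfl, rfl⟩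
  · exact sepState_half_ketBra_add_sub 0 0 1 1 rfl rfl
  · exact sepState_half_ketBra_add_sub 1 0 0 1 rfl rfl
  · exact sepState_half_ketBra_add_of_phases (z := 1) (w := 1) (by simp) (by simp)
      (by simp [bell]) (by simp [bell])
  · rw [bellProj_eq_ketBra_I_smul 3]
    exact sepState_half_ketBra_add_of_phases (z := Complex.I) (w := -Complex.I) (by simp) (by simp)
      (by simp [bell]) (by rw [bell_three]; module)
  · rw [bellProj_eq_ketBra_I_smul 2]
    exact sepState_half_ketBra_add_of_phases (z := Complex.I) (w := Complex.I) (by simp) (by simp)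
      (by simp [bell, sub_eq_add_neg]) (by rw [bell_two]; module)
  · exact sepState_half_ketBra_add_of_phases (z := 1) (w := -1) (by simp) (by simp)
      (by simp [bell, sub_eq_add_neg]) (by simp [bell, sub_eq_add_neg])

end Separable

section SeparabilityPreserving

variable {T : Mat4 →ₗ[ℝ] Mat4}

lemma overlap_map_bellProj_add_le_one (hsep : ∀ ρ, SepState ρ → SepState (T ρ)) (k : Fin 4)
    {i j : Fin 4} (hij : i ≠ j) :
    overlap (bell k) (T (bellProj i)) + overlap (bell k) (T (bellProj j)) ≤ 1 := by
  have hle := overlap_bell_le_half_of_sepState k (hsep _ (sepState_half_bellProj_add hij))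
  rw [map_smul, map_smul, map_add, map_add, smul_eq_mul] at hle
  linarith

lemma trace_map_bellProj (hsep : ∀ ρ, SepState ρ → SepState (T ρ)) (i : Fin 4) :
    (T (bellProj i)).trace = 1 := by
  have hpair {j k : Fin 4} (hjk : j ≠ k) :
      (T (bellProj j)).trace + (T (bellProj k)).trace = 2 := by
    have htr := (hsep _ (sepState_half_bellProj_add hjk)).isDensity.2
    rw [map_smul, map_add, trace_smul, trace_add, Complex.real_smul] at htr
    push_cast at htr
    linear_combination 2 * htr
  obtain ⟨j, k, hij, hik, hjk⟩ : ∃ j k : Fin 4, i ≠ j ∧ i ≠ k ∧ j ≠ k := by decide +revert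
  linear_combination (hpair hij + hpair hik - hpair hjk) / 2

lemma map_mems (f : Mat4 →ₗ[ℝ] ℝ) (l1 l2 l3 l4 : ℝ) :
    f (mems l1 l2 l3 l4) = l1 * f (bellProj 0) + l2 * f (ketBra (ket 0 1) (ket 0 1)) +
      l3 * f (bellProj 1) + l4 * f (ketBra (ket 1 0) (ket 1 0)) := by
  simp only [mems, Complex.coe_smul, map_add, map_smul, smul_eq_mul]

lemma overlap_bell_bdiag (i : Fin 4) (l1 l2 l3 l4 : ℝ) :
    overlap (bell i) (bdiag l1 l2 l3 l4) = ![l1, l2, l3, l4] i := by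
  simp only [bdiag, Complex.coe_smul, map_add, map_smul, smul_eq_mul, overlap_bell_bellProj]
  fin_cases i <;> simp

lemma one_le_overlap_map_bellProj_zero (hsep : ∀ ρ, SepState ρ → SepState (T ρ))
    {l1 l2 l3 l4 : ℝ} (h3 : 0 ≤ l3) (h2 : 0 ≤ l2) (h42 : l4 ≤ l2) (h1 : 2 * l2 + l3 < l1)
    (hmap : overlap (bell 0) (T (mems l1 l2 l3 l4)) = l1) :
    1 ≤ overlap (bell 0) (T (bellProj 0)) := by
  have hmems := map_mems (overlap (bell 0) ∘ₗ T) l1 l2 l3 l4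
  have hadd := congrArg (overlap (bell 0) ∘ₗ T) ketBra_ket_add_eq_bellProj_add
  simp only [map_add, LinearMap.comp_apply, hmap] at hmems hadd
  have hA2 := overlap_map_bellProj_add_le_one hsep 0 (show (0 : Fin 4) ≠ 1 by decide)
  have hA3 := overlap_map_bellProj_add_le_one hsep 0 (show (0 : Fin 4) ≠ 2 by decide)
  have hA4 := overlap_map_bellProj_add_le_one hsep 0 (show (0 : Fin 4) ≠ 3 by decide)
  have h10 := overlap_nonneg (bell 0) (hsep _ (sepState_ketBra_ket 1 0)).isDensity.1
  set x := overlap (bell 0) (T (bellProj 0))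
  set y := overlap (bell 0) (T (ketBra (ket 0 1) (ket 0 1)))
  set y' := overlap (bell 0) (T (ketBra (ket 1 0) (ket 1 0)))
  set w := overlap (bell 0) (T (bellProj 1))
  have hle : l1 ≤ l1 * x + (2 * l2 + l3) * (1 - x) := calc
    l1 = l1 * x + l2 * y + l3 * w + l4 * y' := hmems
    _ ≤ l1 * x + l2 * y + l3 * w + l2 * y' := by gcongr
    _ = l1 * x + l2 * (y + y') + l3 * w := by ring
    _ ≤ l1 * x + l2 * (2 * (1 - x)) + l3 * (1 - x) := by gcongr <;> linarith
    _ = l1 * x + (2 * l2 + l3) * (1 - x) := by ring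
  by_contra! hlt
  linarith [mul_pos (sub_pos.2 h1) (sub_pos.2 hlt)]

lemma overlap_bell_one_map_mems_le (hsep : ∀ ρ, SepState ρ → SepState (T ρ))
    {l1 l2 l3 l4 : ℝ} (h1 : 0 ≤ l1) (h3 : 0 ≤ l3) (h32 : l3 ≤ 2 * l2) (h34 : l3 ≤ 2 * l4)
    (hzero : overlap (bell 1) (T (bellProj 0)) ≤ 0) :
    overlap (bell 1) (T (mems l1 l2 l3 l4)) ≤ (l2 + l3 + l4) / 2 := by
  have hmems := map_mems (overlap (bell 1) ∘ₗ T) l1 l2 l3 l4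
  have hadd := congrArg (overlap (bell 1) ∘ₗ T) ketBra_ket_add_eq_bellProj_add
  simp only [map_add, LinearMap.comp_apply] at hmems hadd
  have hB3 := overlap_map_bellProj_add_le_one hsep 1 (show (1 : Fin 4) ≠ 2 by decide)
  have hB4 := overlap_map_bellProj_add_le_one hsep 1 (show (1 : Fin 4) ≠ 3 by decide)
  have h01 := overlap_bell_le_half_of_sepState 1 (hsep _ (sepState_ketBra_ket 0 1))
  have h10 := overlap_bell_le_half_of_sepState 1 (hsep _ (sepState_ketBra_ket 1 0))
  rw [hmems]
  set x := overlap (bell 1) (T (bellProj 0))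
  set y := overlap (bell 1) (T (ketBra (ket 0 1) (ket 0 1)))
  set y' := overlap (bell 1) (T (ketBra (ket 1 0) (ket 1 0)))
  set w := overlap (bell 1) (T (bellProj 1))
  have hx : l1 * x ≤ 0 := mul_nonpos_of_nonneg_of_nonpos h1 hzero
  calc
    l1 * x + l2 * y + l3 * w + l4 * y'
      = l1 * x + (l2 - l3 / 2) * y + (l4 - l3 / 2) * y' + l3 * ((y + y') / 2 + w) := by ring
    _ ≤ 0 + (l2 - l3 / 2) * (1 / 2) + (l4 - l3 / 2) * (1 / 2) + l3 * 1 := by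
      gcongr <;> linarith
    _ = (l2 + l3 + l4) / 2 := by ring

end SeparabilityPreserving

section Kraus

variable {ι m n : Type*} [Fintype ι] [Fintype n]

/-- The map `X ↦ ∑ i, K i * X * (K i)ᴴ` with Kraus operators `K`, not assumed trace preserving. -/
def krausMap (K : ι → Matrix m n ℂ) : Matrix n n ℂ →ₗ[ℂ] Matrix m m ℂ where
  toFun X := ∑ i, K i * X * (K i)ᴴ
  map_add' X Y := by simp only [Matrix.mul_add, Matrix.add_mul, Finset.sum_add_distrib]
  map_smul' c X := by
    simp only [Matrix.mul_smul, Matrix.smul_mul, Finset.smul_sum, RingHom.id_apply]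

lemma posSemidef_krausMap [Finite m] (K : ι → Matrix m n ℂ) {X : Matrix n n ℂ} (hX : X.PosSemidef) :
    (krausMap K X).PosSemidef :=
  posSemidef_sum _ fun i _ => hX.mul_mul_conjTranspose_same (K i)

end Kraus

theorem no_NE_regionB_general (l1 l2 l3 l4 : ℝ) (h3 : 0 ≤ l3)
    (hB1 : 2 * l2 + l3 < l1) (hB3 : l3 ≤ 2 * l4) (hB4 : l3 + l4 < l2)
    (T : Mat4 →ₗ[ℝ] Mat4) (hpos : ∀ X, X.PosSemidef → (T X).PosSemidef)
    (hsep : ∀ ρ, SepState ρ → SepState (T ρ)) :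
    T (mems l1 l2 l3 l4) ≠ bdiag l1 l2 l3 l4 := by
  intro hmap
  have hone : 1 ≤ overlap (bell 0) (T (bellProj 0)) :=
    one_le_overlap_map_bellProj_zero hsep h3 (by linarith) (by linarith) hB1
      (by rw [hmap, overlap_bell_bdiag]; rfl)
  have hzero : overlap (bell 1) (T (bellProj 0)) ≤ 0 := by
    have htrace := overlap_bell_add_le_trace (hpos _ (posSemidef_ketBra_self (bell 0)))
      (show (0 : Fin 4) ≠ 1 by decide)
    rw [← bellProj, trace_map_bellProj hsep, Complex.one_re] at htrace
    linarith
  have hle : l2 ≤ (l2 + l3 + l4) / 2 := calc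
    l2 = overlap (bell 1) (T (mems l1 l2 l3 l4)) := by rw [hmap, overlap_bell_bdiag]; rfl
    _ ≤ (l2 + l3 + l4) / 2 :=
      overlap_bell_one_map_mems_le hsep (by linarith) h3 (by linarith) hB3 hzero
  linarith

theorem no_NE_regionB (l1 l2 l3 l4 : ℝ)
    (h12 : l2 ≤ l1) (h23 : l3 ≤ l2) (h34 : l4 ≤ l3) (h4 : 0 ≤ l4)
    (hsum : l1 + l2 + l3 + l4 = 1)
    (hB1 : 2 * l2 + l3 - l1 < 0) (hB2 : 0 ≤ 2 * l3 + l4 - l2)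
    (hB3 : l3 ≤ 2 * l4) (hB4 : l2 > l3 + l4) :
    ¬ ∃ T : Mat4 → Mat4, IsNE T ∧ T (mems l1 l2 l3 l4) = bdiag l1 l2 l3 l4 := by
  rintro ⟨T, ⟨⟨k, K, -, hK⟩, hNE⟩, hmap⟩
  obtain rfl : T = krausMap K := funext hK
  exact no_NE_regionB_general l1 l2 l3 l4 (h4.trans h34) (sub_neg.1 hB1) hB3 hB4
    ((krausMap K).restrictScalars ℝ) (fun X hX => posSemidef_krausMap K hX) hNE hmap
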